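/- Let n be an even integer and let g : ℝⁿ → ℝ be a smooth function. Then for all x ∈ ℝⁿ and t > 0, S_n(t)g(x) = J_n(t)g(x) + e^{-t/2} W_n(t)g(x), where J_n(t)g(x) = (c_n e^{-t/2}/2^{n-2}) ∫_{B_t(x)} k_{n/2}((1/2)√(t² − r²)) g(y) dy and W_n(t)g(x) = 2 c_n Σ_{j=0}^{(n-2)/2} (1/(8^j j!)) ((1/t) ∂/∂t)^{(n-2)/2 − j} ∫_{B_t(x)} (1/√(t² − r²)) g(y) dy. -/

import Mathlib

open Real Set Filter MeasureTheory Metric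
open scoped Nat Topology

noncomputable section

/-- The even-dimensional kernel `k_ℓ(s) = Σ_{j=0}^∞ s^{2j+1}/((2(j+ℓ))‼ (2j+1)‼)`. -/
def kEven (ℓ : ℕ) (s : ℝ) : ℝ :=
  ∑' j : ℕ, s ^ (2 * j + 1) / (((2 * (j + ℓ))‼ : ℝ) * (((2 * j + 1)‼ : ℝ)))

/-- `k`-fold iterate of the operator `F ↦ (1/t) ∂F/∂t` in the `t`-variable. -/
def iterOp : ℕ → (ℝ → ℝ) → ℝ → ℝ
  | 0, F, t => F t
  | (k + 1), F, t => (1 / t) * deriv (iterOp k F) t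

/-- `c_n = 2^{-(n+2)/2} π^{-n/2}` for even `n`. -/
def cnEven (n : ℕ) : ℝ := (2 : ℝ) ^ (-((n : ℝ) + 2) / 2) * π ^ (-(n : ℝ) / 2)

/-- The solution operator `S_n(t)g(x)` for even `n`. -/
def Sn (n : ℕ) (g : EuclideanSpace ℝ (Fin n) → ℝ) (x : EuclideanSpace ℝ (Fin n)) (t : ℝ) : ℝ :=
  2 * cnEven n * exp (-t / 2) *
    iterOp ((n - 2) / 2)
      (fun s => ∫ y in closedBall x s,
        (Real.cosh ((1 / 2) * Real.sqrt (s ^ 2 - ‖x - y‖ ^ 2)) /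
          Real.sqrt (s ^ 2 - ‖x - y‖ ^ 2)) * g y) t

/-- The heat part `J_n(t)g(x)` for even `n`. -/
def Jn (n : ℕ) (g : EuclideanSpace ℝ (Fin n) → ℝ) (x : EuclideanSpace ℝ (Fin n)) (t : ℝ) : ℝ :=
  (cnEven n * exp (-t / 2) / 2 ^ (n - 2)) *
    ∫ y in closedBall x t, kEven (n / 2) ((1 / 2) * Real.sqrt (t ^ 2 - ‖x - y‖ ^ 2)) * g y

/-- The wave part `W_n(t)g(x)` for even `n`. -/
def Wn (n : ℕ) (g : EuclideanSpace ℝ (Fin n) → ℝ) (x : EuclideanSpace ℝ (Fin n)) (t : ℝ) : ℝ :=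
  2 * cnEven n * ∑ j ∈ Finset.range ((n - 2) / 2 + 1),
    (1 / (8 ^ j * (j ! : ℝ))) *
      iterOp ((n - 2) / 2 - j)
        (fun s => ∫ y in closedBall x s,
          (1 / Real.sqrt (s ^ 2 - ‖x - y‖ ^ 2)) * g y) t

/-- The summands of `kEven` are dominated by those of an exponential series, even after
multiplication by `2 * j + 1`. -/
lemma inv_doubleFactorial_mul_le (ℓ j : ℕ) :
    (2 * j + 1 : ℝ) / (((2 * (j + ℓ))‼ : ℝ) * ((2 * j + 1)‼ : ℝ)) ≤ 1 / (j ! : ℝ) := by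
  have h1 : j ! ≤ (2 * (j + ℓ))‼ := by
    rw [Nat.doubleFactorial_two_mul]
    exact (Nat.factorial_le (Nat.le_add_right j ℓ)).trans
      (Nat.le_mul_of_pos_left _ (by positivity))
  have h2 : 2 * j + 1 ≤ (2 * j + 1)‼ := by
    rw [Nat.doubleFactorial_add_one]
    exact Nat.le_mul_of_pos_right _ (Nat.doubleFactorial_pos _)
  have h3 : (2 * j + 1) * j ! ≤ (2 * (j + ℓ))‼ * (2 * j + 1)‼ := by
    rw [mul_comm]; exact Nat.mul_le_mul h1 h2
  have hpos : 0 < (2 * (j + ℓ))‼ * (2 * j + 1)‼ :=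
    Nat.mul_pos (Nat.doubleFactorial_pos _) (Nat.doubleFactorial_pos _)
  rw [div_le_div_iff₀ (by exact_mod_cast hpos) (by positivity), one_mul]
  exact_mod_cast h3

lemma summable_kEven_deriv (ℓ : ℕ) (s : ℝ) :
    Summable fun j : ℕ => (2 * j + 1 : ℝ) * s ^ (2 * j) /
      (((2 * (j + ℓ))‼ : ℝ) * ((2 * j + 1)‼ : ℝ)) := by
  refine Summable.of_nonneg_of_le (fun j => ?_) (fun j => ?_)
    (Real.summable_pow_div_factorial (s ^ 2))
  · have : 0 ≤ s ^ (2 * j) := (even_two_mul j).pow_nonneg s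
    positivity
  · have h := mul_le_mul_of_nonneg_right (inv_doubleFactorial_mul_le ℓ j)
      ((even_two_mul j).pow_nonneg s)
    rw [← pow_mul]
    calc _ = (2 * j + 1 : ℝ) / (((2 * (j + ℓ))‼ : ℝ) * ((2 * j + 1)‼ : ℝ)) * s ^ (2 * j) := by ring
      _ ≤ _ := h
      _ = _ := by ring

lemma summable_kEven (ℓ : ℕ) (s : ℝ) :
    Summable fun j : ℕ => s ^ (2 * j + 1) / (((2 * (j + ℓ))‼ : ℝ) * ((2 * j + 1)‼ : ℝ)) := by
  refine Summable.of_norm_bounded ((summable_kEven_deriv ℓ s).mul_left |s|) fun j => ?_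
  have h1 : 0 ≤ s ^ (2 * j) := (even_two_mul j).pow_nonneg s
  rw [Real.norm_eq_abs, abs_div, pow_succ, abs_mul, abs_of_nonneg h1,
    abs_of_nonneg (by positivity : (0 : ℝ) ≤ ((2 * (j + ℓ))‼ : ℝ) * ((2 * j + 1)‼ : ℝ)),
    ← mul_div_assoc]
  refine div_le_div_of_nonneg_right ?_ (by positivity)
  nlinarith [mul_nonneg (mul_nonneg (abs_nonneg s) h1) (Nat.cast_nonneg (α := ℝ) j)]

lemma kEven_zero (ℓ : ℕ) : kEven ℓ 0 = 0 := by simp [kEven]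

lemma kEven_nonneg (ℓ : ℕ) {s : ℝ} (hs : 0 ≤ s) : 0 ≤ kEven ℓ s :=
  tsum_nonneg fun _ => by positivity

lemma tsum_kEven_deriv (ℓ : ℕ) (s : ℝ) :
    ∑' j : ℕ, (2 * j + 1 : ℝ) * s ^ (2 * j) / (((2 * (j + ℓ))‼ : ℝ) * ((2 * j + 1)‼ : ℝ)) =
      1 / ((2 * ℓ)‼ : ℝ) + s * kEven (ℓ + 1) s := by
  rw [(summable_kEven_deriv ℓ s).tsum_eq_zero_add, kEven, ← tsum_mul_left]
  congr 1
  · simp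
  · refine tsum_congr fun j => ?_
    have e1 : j + 1 + ℓ = j + (ℓ + 1) := by ring
    have e2 : (2 * (j + 1) + 1)‼ = (2 * j + 3) * (2 * j + 1)‼ := Nat.doubleFactorial_add_two _
    have : 0 < (2 * (j + (ℓ + 1)))‼ := Nat.doubleFactorial_pos _
    have : 0 < (2 * j + 1)‼ := Nat.doubleFactorial_pos _
    rw [e1, e2]
    push_cast
    field_simp
    ring

lemma hasDerivAt_kEven (ℓ : ℕ) (s : ℝ) :
    HasDerivAt (kEven ℓ) (1 / ((2 * ℓ)‼ : ℝ) + s * kEven (ℓ + 1) s) s := by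
  rw [← tsum_kEven_deriv]
  refine hasDerivAt_tsum_of_isPreconnected (t := ball (0 : ℝ) (|s| + 1)) (y₀ := 0)
    (g := fun (j : ℕ) (y : ℝ) =>
      y ^ (2 * j + 1) / (((2 * (j + ℓ))‼ : ℝ) * ((2 * j + 1)‼ : ℝ)))
    (g' := fun (j : ℕ) (y : ℝ) =>
      (2 * j + 1 : ℝ) * y ^ (2 * j) / (((2 * (j + ℓ))‼ : ℝ) * ((2 * j + 1)‼ : ℝ)))
    (summable_kEven_deriv ℓ (|s| + 1)) isOpen_ball
    (convex_ball _ _).isPreconnected (fun j y _ => ?_) (fun j y hy => ?_)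
    (mem_ball_self (by positivity)) (summable_kEven ℓ 0) (by simp)
  · have h := (hasDerivAt_pow (2 * j + 1) y).div_const
      (((2 * (j + ℓ))‼ : ℝ) * ((2 * j + 1)‼ : ℝ))
    push_cast [Nat.add_sub_cancel] at h
    exact h
  · have h1 : 0 ≤ y ^ (2 * j) := (even_two_mul j).pow_nonneg y
    rw [Real.norm_of_nonneg (by positivity)]
    rw [mem_ball_zero_iff, Real.norm_eq_abs] at hy
    have h2 : y ^ (2 * j) ≤ (|s| + 1) ^ (2 * j) := by
      rw [← (even_two_mul j).pow_abs y]
      gcongr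
    gcongr (2 * j + 1 : ℝ) * ?_ / _

lemma continuous_kEven (ℓ : ℕ) : Continuous (kEven ℓ) :=
  continuous_iff_continuousAt.2 fun s => (hasDerivAt_kEven ℓ s).continuousAt

lemma cosh_eq_one_add_mul_kEven (s : ℝ) : Real.cosh s = 1 + s * kEven 1 s := by
  rw [Real.cosh_eq_tsum, s.hasSum_cosh.summable.tsum_eq_zero_add, kEven, ← tsum_mul_left]
  congr 1
  · simp
  · refine tsum_congr fun j => ?_
    rw [← Nat.cast_mul, show 2 * (j + 1) = 2 * j + 1 + 1 by ring,
      Nat.factorial_eq_mul_doubleFactorial]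
    ring

lemma cosh_div_self (a : ℝ) :
    Real.cosh ((1 / 2) * a) / a = 1 / a + (1 / 2) * kEven 1 ((1 / 2) * a) := by
  rcases eq_or_ne a 0 with rfl | ha
  · simp [kEven_zero]
  · rw [cosh_eq_one_add_mul_kEven]
    field_simp

lemma contDiffOn_iterOp {F : ℝ → ℝ} (hF : ContDiffOn ℝ (⊤ : ℕ∞) F (Ioi 0)) (k : ℕ) :
    ContDiffOn ℝ (⊤ : ℕ∞) (iterOp k F) (Ioi 0) := by
  induction k with
  | zero => exact hF
  | succ k ih =>
    have h1 : ContDiffOn ℝ (⊤ : ℕ∞) (fun t : ℝ => 1 / t) (Ioi 0) :=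
      contDiffOn_const.div contDiffOn_id fun t ht => ne_of_gt ht
    exact h1.mul ((contDiffOn_infty_iff_deriv_of_isOpen isOpen_Ioi).1 ih).2

lemma differentiableAt_iterOp {F : ℝ → ℝ} (hF : ContDiffOn ℝ (⊤ : ℕ∞) F (Ioi 0)) (k : ℕ)
    {t : ℝ} (ht : 0 < t) : DifferentiableAt ℝ (iterOp k F) t :=
  ((contDiffOn_iterOp hF k).differentiableOn (by simp)).differentiableAt (Ioi_mem_nhds ht)

/-- The combinatorial heart of the decomposition: a recursion `t⁻¹ K_ℓ' = a_ℓ P + K_{ℓ+1} / 4`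
turns into a closed formula for the iterates of `t⁻¹ d/dt`. -/
lemma iterOp_eq_sum_add {F P : ℝ → ℝ} {K : ℕ → ℝ → ℝ}
    (hP : ContDiffOn ℝ (⊤ : ℕ∞) P (Ioi 0))
    (hF : ∀ t, 0 < t → F t = P t + (1 / 2) * K 1 t)
    (hK : ∀ ℓ t, 0 < t → HasDerivAt (K ℓ)
      (t * ((1 / (2 * ((2 * ℓ)‼ : ℝ))) * P t + (1 / 4) * K (ℓ + 1) t)) t) (m : ℕ) :
    ∀ t, 0 < t → iterOp m F t =
      ∑ j ∈ Finset.range (m + 1), (1 / (8 ^ j * (j ! : ℝ))) * iterOp (m - j) P t +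
        (1 / 2) * (1 / 4 ^ m) * K (m + 1) t := by
  induction m with
  | zero => intro t ht; simpa [iterOp] using hF t ht
  | succ m ih =>
    intro t ht
    have hev : iterOp m F =ᶠ[𝓝 t] fun t =>
        ∑ j ∈ Finset.range (m + 1), (1 / (8 ^ j * (j ! : ℝ))) * iterOp (m - j) P t +
          (1 / 2) * (1 / 4 ^ m) * K (m + 1) t :=
      eventually_of_mem (Ioi_mem_nhds ht) ih
    have hd := (HasDerivAt.fun_sum (u := Finset.range (m + 1)) fun j _ =>
      (differentiableAt_iterOp hP (m - j) ht).hasDerivAt.const_mul (1 / (8 ^ j * (j ! : ℝ)))).add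
        ((hK (m + 1) t ht).const_mul ((1 / 2) * (1 / 4 ^ m)))
    have hstep : iterOp (m + 1) F t = (1 / t) * deriv (iterOp m F) t := rfl
    have hd' := hd.deriv
    simp only [Pi.add_def] at hd'
    rw [hstep, hev.deriv_eq, hd', Finset.sum_range_succ _ (m + 1), mul_add,
      Finset.mul_sum]
    have hsum : ∑ j ∈ Finset.range (m + 1),
        1 / t * (1 / (8 ^ j * (j ! : ℝ)) * deriv (iterOp (m - j) P) t) =
        ∑ j ∈ Finset.range (m + 1), 1 / (8 ^ j * (j ! : ℝ)) * iterOp (m + 1 - j) P t := by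
      refine Finset.sum_congr rfl fun j hj => ?_
      rw [Nat.succ_sub (Nat.lt_succ_iff.1 (Finset.mem_range.1 hj))]
      simp only [iterOp]
      ring
    rw [hsum, Nat.sub_self, Nat.doubleFactorial_two_mul]
    simp only [iterOp]
    have h8 : (8 : ℝ) ^ (m + 1) = 4 ^ (m + 1) * 2 ^ (m + 1) := by
      rw [← mul_pow]; norm_num
    have hfac : ((m + 1)! : ℝ) ≠ 0 := by positivity
    push_cast [h8]
    field_simp
    ring

lemma sqrt_sq_sub_sq_eq_zero {s r : ℝ} (hs : 0 ≤ s) (h : s ≤ r) : √(s ^ 2 - r ^ 2) = 0 :=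
  Real.sqrt_eq_zero_of_nonpos (by nlinarith)

section OneDimensional

lemma integrableOn_one_div_sqrt {s : ℝ} (hs : 0 < s) :
    IntegrableOn (fun r : ℝ => 1 / √(s ^ 2 - r ^ 2)) (Ioc 0 s) := by
  refine intervalIntegral.integrableOn_deriv_of_nonneg (g := fun r => Real.arcsin (r / s))
    (by fun_prop) (fun r hr => ?_) fun r _ => by positivity
  have h1 : r / s < 1 := (div_lt_one hs).2 hr.2
  have h0 : 0 < r / s := div_pos hr.1 hs
  have h := (Real.hasDerivAt_arcsin (by linarith) h1.ne).comp r ((hasDerivAt_id r).div_const s)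
  convert! h using 1
  have e : s ^ 2 - r ^ 2 = s ^ 2 * (1 - (r / s) ^ 2) := by field_simp
  rw [e, Real.sqrt_mul (sq_nonneg s), Real.sqrt_sq hs.le]
  ring

lemma hasDerivAt_comp_sqrt_sq_sub_sq {Φ Φ' : ℝ → ℝ} (hΦ : ∀ a, HasDerivAt Φ (Φ' a) a)
    {r σ : ℝ} (hr : 0 ≤ r) (h : r < σ) :
    HasDerivAt (fun σ => Φ √(σ ^ 2 - r ^ 2))
      (σ * (Φ' √(σ ^ 2 - r ^ 2) / √(σ ^ 2 - r ^ 2))) σ := by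
  have hpos : 0 < σ ^ 2 - r ^ 2 := by nlinarith
  have h1 : HasDerivAt (fun σ : ℝ => σ ^ 2 - r ^ 2) (2 * σ) σ := by
    simpa using (hasDerivAt_pow 2 σ).sub_const (r ^ 2)
  have h2 := (hΦ √(σ ^ 2 - r ^ 2)).comp σ (h1.sqrt hpos.ne')
  convert! h2 using 1
  have := (Real.sqrt_pos.2 hpos).ne'
  field_simp

lemma integral_comp_sqrt_deriv {Φ Φ' : ℝ → ℝ} (hΦ : ∀ a, HasDerivAt Φ (Φ' a) a)
    (hΦ0 : Φ 0 = 0) (hΦ' : ∀ a, 0 ≤ a → 0 ≤ Φ' a) {r T : ℝ} (hr : 0 ≤ r) (hT : 0 < T) :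
    IntegrableOn (fun σ => σ * (Φ' √(σ ^ 2 - r ^ 2) / √(σ ^ 2 - r ^ 2))) (Ioc 0 T) ∧
    ∫ σ in Ioc 0 T, σ * (Φ' √(σ ^ 2 - r ^ 2) / √(σ ^ 2 - r ^ 2)) = Φ √(T ^ 2 - r ^ 2) := by
  set q : ℝ → ℝ := fun σ => σ * (Φ' √(σ ^ 2 - r ^ 2) / √(σ ^ 2 - r ^ 2))
  have hΦc : Continuous Φ := continuous_iff_continuousAt.2 fun a => (hΦ a).continuousAt
  have hm0 : 0 ≤ min r T := le_min hr hT.le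
  have hmT : min r T ≤ T := min_le_right _ _
  have hq0 : EqOn q 0 (Ioc 0 (min r T)) := fun σ hσ => by
    simp [q, sqrt_sq_sub_sq_eq_zero hσ.1.le (hσ.2.trans (min_le_left r T))]
  have hcont : ContinuousOn (fun σ => Φ √(σ ^ 2 - r ^ 2)) (Icc (min r T) T) := by fun_prop
  have hder : ∀ σ ∈ Ioo (min r T) T, HasDerivAt (fun σ => Φ √(σ ^ 2 - r ^ 2)) (q σ) σ := by
    intro σ hσ
    refine hasDerivAt_comp_sqrt_sq_sub_sq hΦ hr ?_
    rcases min_lt_iff.1 hσ.1 with h | h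
    · exact h
    · exact absurd h hσ.2.not_gt
  have hint1 : IntegrableOn q (Ioc 0 (min r T)) :=
    (integrableOn_congr_fun hq0 measurableSet_Ioc).2 integrableOn_zero
  have hint2 : IntegrableOn q (Ioc (min r T) T) :=
    intervalIntegral.integrableOn_deriv_of_nonneg hcont hder fun σ hσ =>
      mul_nonneg (hm0.trans hσ.1.le) (div_nonneg (hΦ' _ (Real.sqrt_nonneg _)) (Real.sqrt_nonneg _))
  have hunion := Ioc_union_Ioc_eq_Ioc hm0 hmT
  refine ⟨hunion ▸ hint1.union hint2, ?_⟩
  rw [← hunion, setIntegral_union (Ioc_disjoint_Ioc_of_le le_rfl) measurableSet_Ioc hint1 hint2,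
    setIntegral_congr_fun measurableSet_Ioc hq0, ← intervalIntegral.integral_of_le hmT,
    intervalIntegral.integral_eq_sub_of_hasDerivAt_of_le hmT hcont hder
      ((intervalIntegrable_iff_integrableOn_Ioc_of_le hmT).2 hint2),
    sqrt_sq_sub_sq_eq_zero hm0 (min_le_left r T), hΦ0]
  simp

end OneDimensional

section Radial

variable {E : Type*} [NormedAddCommGroup E] [NormedSpace ℝ E] [FiniteDimensional ℝ E]
  [MeasurableSpace E] [BorelSpace E] (μ : Measure E) [μ.IsAddHaarMeasure]

/-- The integral of `ψ(√(s² - ‖z‖²)) h(z)`; if `ψ 0 = 0`, only the ball of radius `s`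
contributes. -/
def radialIntegral (ψ : ℝ → ℝ) (h : E → ℝ) (s : ℝ) : ℝ :=
  ∫ z, ψ √(s ^ 2 - ‖z‖ ^ 2) * h z ∂μ

lemma setIntegral_closedBall_eq_radialIntegral {ψ : ℝ → ℝ} (hψ : ψ 0 = 0) (g : E → ℝ) (x : E)
    {s : ℝ} (hs : 0 ≤ s) :
    ∫ y in closedBall x s, ψ √(s ^ 2 - ‖x - y‖ ^ 2) * g y ∂μ =
      radialIntegral μ ψ (fun z => g (x - z)) s := by
  rw [setIntegral_eq_integral_of_forall_compl_eq_zero, radialIntegral,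
    ← integral_sub_left_eq_self _ μ x]
  · simp
  · intro y hy
    rw [mem_closedBall, not_le, dist_comm, dist_eq_norm] at hy
    rw [sqrt_sq_sub_sq_eq_zero hs hy.le, hψ, zero_mul]

lemma radialIntegral_eq_scaled (ψ : ℝ → ℝ) (h : E → ℝ) {s : ℝ} (hs : 0 < s) :
    radialIntegral μ ψ h s =
      s ^ Module.finrank ℝ E * ∫ z, ψ (s * √(1 ^ 2 - ‖z‖ ^ 2)) * h (s • z) ∂μ := by
  have hscale (z : E) : s * √(1 ^ 2 - ‖z‖ ^ 2) = √(s ^ 2 - ‖s • z‖ ^ 2) := by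
    rw [norm_smul, Real.norm_of_nonneg hs.le,
      show s ^ 2 - (s * ‖z‖) ^ 2 = s ^ 2 * (1 ^ 2 - ‖z‖ ^ 2) by ring,
      Real.sqrt_mul (sq_nonneg s), Real.sqrt_sq hs.le]
  simp_rw [hscale]
  rw [Measure.integral_comp_smul_of_nonneg μ (fun z => ψ √(s ^ 2 - ‖z‖ ^ 2) * h z) s
    (hR := hs.le), smul_eq_mul, mul_inv_cancel_left₀ (by positivity), radialIntegral]

variable {μ}

lemma integrable_mul_of_eq_zero {ν : Measure E} {w h : E → ℝ} {R : ℝ} (hw : Integrable w ν)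
    (hw0 : ∀ z, R < ‖z‖ → w z = 0) (hh : Continuous h) : Integrable (fun z => w z * h z) ν := by
  rw [← integrableOn_iff_integrable_of_support_subset (s := closedBall 0 R)]
  · exact hw.integrableOn.mul_continuousOn hh.continuousOn (isCompact_closedBall 0 R)
  · intro z hz
    by_contra hR
    exact hz (by simp [hw0 z (by simpa using hR)])

lemma integrable_comp_sqrt {Φ : ℝ → ℝ} (hΦ : Continuous Φ) (hΦ0 : Φ 0 = 0) {s : ℝ} (hs : 0 ≤ s) :
    Integrable (fun z : E => Φ √(s ^ 2 - ‖z‖ ^ 2)) μ := by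
  refine Continuous.integrable_of_hasCompactSupport (by fun_prop)
    (HasCompactSupport.intro (isCompact_closedBall 0 s) fun z hz => ?_)
  rw [mem_closedBall_zero_iff, not_le] at hz
  rw [sqrt_sq_sub_sq_eq_zero hs hz.le, hΦ0]

lemma integrable_one_div_sqrt [Nontrivial E] {s : ℝ} (hs : 0 < s) :
    Integrable (fun z : E => 1 / √(s ^ 2 - ‖z‖ ^ 2)) μ := by
  rw [integrable_fun_norm_addHaar μ (f := fun r : ℝ => 1 / √(s ^ 2 - r ^ 2)),
    ← Ioc_union_Ioi_eq_Ioi hs.le]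
  refine IntegrableOn.union ?_ ?_
  · exact (((integrableOn_Icc_iff_integrableOn_Ioc).2 (integrableOn_one_div_sqrt hs)).continuousOn_mul
      (by fun_prop) isCompact_Icc).mono_set Ioc_subset_Icc_self
  · refine (integrableOn_congr_fun (g := 0) (fun r hr => ?_) measurableSet_Ioi).2 integrableOn_zero
    simp [sqrt_sq_sub_sq_eq_zero hs.le (mem_Ioi.1 hr).le]

lemma hasDerivAt_integral_mul_of_contDiff {ν : Measure E} {w : E → ℝ} {R : ℝ} (hw : Integrable w ν)
    (hw0 : ∀ z, R < ‖z‖ → w z = 0) {G : ℝ × E → ℝ} (hG : ContDiff ℝ (⊤ : ℕ∞) G) (s : ℝ) :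
    HasDerivAt (fun s => ∫ z, w z * G (s, z) ∂ν)
      (∫ z, w z * fderiv ℝ G (s, z) (1, 0) ∂ν) s := by
  have hG' : Continuous fun p => fderiv ℝ G p (1, 0) :=
    (hG.continuous_fderiv (by simp)).clm_apply continuous_const
  obtain ⟨C, hC⟩ := ((isCompact_closedBall s 1).prod
    (isCompact_closedBall (0 : E) R)).exists_bound_of_continuousOn hG'.continuousOn
  refine (hasDerivAt_integral_of_dominated_loc_of_deriv_le
    (F := fun s z => w z * G (s, z)) (F' := fun s z => w z * fderiv ℝ G (s, z) (1, 0))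
    (bound := fun z => ‖w z‖ * C) (closedBall_mem_nhds s one_pos)
    (Eventually.of_forall fun σ => ?_) ?_ ?_ ?_ (hw.norm.mul_const C) ?_).2
  · exact hw.1.mul (hG.continuous.comp (by fun_prop : Continuous fun z : E => (σ, z))).aestronglyMeasurable
  · exact integrable_mul_of_eq_zero hw hw0 (hG.continuous.comp (by fun_prop))
  · exact hw.1.mul (hG'.comp (by fun_prop : Continuous fun z : E => (s, z))).aestronglyMeasurable
  · refine Eventually.of_forall fun z σ hσ => ?_
    rcases lt_or_ge R ‖z‖ with h | h
    · simp [hw0 z h]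
    · rw [norm_mul]
      exact mul_le_mul_of_nonneg_left (hC (σ, z) ⟨hσ, by simpa using h⟩) (norm_nonneg _)
  · refine Eventually.of_forall fun z σ _ => HasDerivAt.const_mul _ ?_
    exact ((hG.differentiable (by simp)).differentiableAt (x := (σ, z))).hasFDerivAt.comp_hasDerivAt σ
      ((hasDerivAt_id σ).prodMk (hasDerivAt_const σ z))

lemma contDiff_integral_mul {ν : Measure E} {w : E → ℝ} {R : ℝ} (hw : Integrable w ν)
    (hw0 : ∀ z, R < ‖z‖ → w z = 0) {G : ℝ × E → ℝ} (hG : ContDiff ℝ (⊤ : ℕ∞) G) :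
    ContDiff ℝ (⊤ : ℕ∞) fun s => ∫ z, w z * G (s, z) ∂ν := by
  rw [contDiff_infty]
  intro k
  induction k generalizing G with
  | zero =>
    exact contDiff_zero.2 (continuous_iff_continuousAt.2 fun s =>
      (hasDerivAt_integral_mul_of_contDiff hw hw0 hG s).continuousAt)
  | succ k ih =>
    push_cast
    refine contDiff_succ_iff_deriv.2 ⟨fun s =>
      (hasDerivAt_integral_mul_of_contDiff hw hw0 hG s).differentiableAt, by simp, ?_⟩
    rw [funext fun s => (hasDerivAt_integral_mul_of_contDiff hw hw0 hG s).deriv]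
    exact ih (G := fun p => fderiv ℝ G p (1, 0))
      ((hG.fderiv_right (by simp)).clm_apply contDiff_const)

lemma continuous_integral_comp_sqrt {Φ : ℝ → ℝ} (hΦ : Continuous Φ) (hΦ0 : Φ 0 = 0) {h : E → ℝ}
    (hh : Continuous h) :
    Continuous fun s : ℝ => ∫ z, Φ (s * √(1 ^ 2 - ‖z‖ ^ 2)) * h (s • z) ∂μ := by
  have key (s : ℝ) : ∫ z in closedBall 0 1, Φ (s * √(1 ^ 2 - ‖z‖ ^ 2)) * h (s • z) ∂μ =
      ∫ z, Φ (s * √(1 ^ 2 - ‖z‖ ^ 2)) * h (s • z) ∂μ := by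
    refine setIntegral_eq_integral_of_forall_compl_eq_zero fun z hz => ?_
    rw [mem_closedBall_zero_iff, not_le] at hz
    rw [sqrt_sq_sub_sq_eq_zero zero_le_one hz.le, mul_zero, hΦ0, zero_mul]
  simp_rw [← key]
  refine continuous_parametric_integral_of_continuous ?_ (isCompact_closedBall 0 1)
  simp only [Function.uncurry_def]
  fun_prop

lemma radialIntegral_eq_intervalIntegral {Φ Φ' : ℝ → ℝ} (hΦ : ∀ a, HasDerivAt Φ (Φ' a) a)
    (hΦ0 : Φ 0 = 0) (hΦ'c : Continuous Φ') (hΦ' : ∀ a, 0 ≤ a → 0 ≤ Φ' a) {h : E → ℝ}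
    (hh : Continuous h) {T : ℝ} (hT : 0 < T) :
    radialIntegral μ Φ h T =
      ∫ σ in (0)..T, σ * radialIntegral μ (fun a => Φ' a / a) h σ := by
  have hΦc : Continuous Φ := continuous_iff_continuousAt.2 fun a => (hΦ a).continuousAt
  have hsec (z : E) := integral_comp_sqrt_deriv hΦ hΦ0 hΦ' (norm_nonneg z) hT
  have hint : Integrable (Function.uncurry fun (z : E) (σ : ℝ) =>
      σ * (Φ' √(σ ^ 2 - ‖z‖ ^ 2) / √(σ ^ 2 - ‖z‖ ^ 2)) * h z)
      (μ.prod (volume.restrict (Ioc 0 T))) := by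
    have hmeas : Measurable (Function.uncurry fun (z : E) (σ : ℝ) =>
        σ * (Φ' √(σ ^ 2 - ‖z‖ ^ 2) / √(σ ^ 2 - ‖z‖ ^ 2)) * h z) := by
      have := hΦ'c.measurable
      have := hh.measurable
      simp only [Function.uncurry_def]
      fun_prop
    rw [integrable_prod_iff hmeas.aestronglyMeasurable]
    refine ⟨Eventually.of_forall fun z => (hsec z).1.mul_const (h z), ?_⟩
    refine (integrable_mul_of_eq_zero (integrable_comp_sqrt hΦc hΦ0 hT.le)
      (R := T) (fun z hz => ?_) hh.norm).congr (Eventually.of_forall fun z => ?_)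
    · rw [sqrt_sq_sub_sq_eq_zero hT.le hz.le, hΦ0]
    · simp only [Function.uncurry_apply_pair]
      rw [← (hsec z).2, ← integral_mul_const]
      refine setIntegral_congr_fun measurableSet_Ioc fun σ hσ => ?_
      simp only [norm_mul]
      rw [Real.norm_of_nonneg hσ.1.le, Real.norm_of_nonneg
        (div_nonneg (hΦ' _ (Real.sqrt_nonneg _)) (Real.sqrt_nonneg _))]
  have hswap := integral_integral_swap hint
  simp_rw [integral_mul_const, (hsec _).2] at hswap
  rw [radialIntegral, hswap, intervalIntegral.integral_of_le hT.le]
  simp_rw [radialIntegral, ← integral_const_mul, mul_assoc]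

lemma contDiff_integral_one_div_sqrt [Nontrivial E] {h : E → ℝ} (hh : ContDiff ℝ (⊤ : ℕ∞) h) :
    ContDiff ℝ (⊤ : ℕ∞) fun s : ℝ => ∫ z, 1 / √(1 ^ 2 - ‖z‖ ^ 2) * h (s • z) ∂μ := by
  refine contDiff_integral_mul (G := fun p : ℝ × E => h (p.1 • p.2)) (R := 1)
    (integrable_one_div_sqrt one_pos) (fun z hz => ?_)
    (hh.comp (contDiff_fst.smul contDiff_snd))
  rw [sqrt_sq_sub_sq_eq_zero zero_le_one hz.le, div_zero]

lemma radialIntegral_one_div_eq_scaled (h : E → ℝ) {s : ℝ} (hs : 0 < s) :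
    radialIntegral μ (fun a => 1 / a) h s =
      s ^ Module.finrank ℝ E * (s⁻¹ * ∫ z, 1 / √(1 ^ 2 - ‖z‖ ^ 2) * h (s • z) ∂μ) := by
  rw [radialIntegral_eq_scaled μ _ h hs, ← integral_const_mul s⁻¹]
  refine congrArg _ (integral_congr_ae (Eventually.of_forall fun z => ?_))
  dsimp only
  ring

lemma contDiffOn_radialIntegral_one_div [Nontrivial E] {h : E → ℝ}
    (hh : ContDiff ℝ (⊤ : ℕ∞) h) :
    ContDiffOn ℝ (⊤ : ℕ∞) (radialIntegral μ (fun a => 1 / a) h) (Ioi 0) := by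
  refine ContDiffOn.congr ?_ fun s hs => radialIntegral_one_div_eq_scaled h hs
  exact (contDiff_id.pow _).contDiffOn.mul
    ((contDiffOn_id.inv fun s hs => ne_of_gt hs).mul
      (contDiff_integral_one_div_sqrt hh).contDiffOn)

lemma radialIntegral_linear_combination [Nontrivial E] {k : ℝ → ℝ} (hk : Continuous k)
    (hk0 : k 0 = 0) {h : E → ℝ} (hh : Continuous h) (c d : ℝ) {s : ℝ} (hs : 0 < s) :
    radialIntegral μ (fun a => c * (1 / a) + d * k a) h s =
      c * radialIntegral μ (fun a => 1 / a) h s + d * radialIntegral μ k h s := by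
  have h1 : Integrable (fun z => 1 / √(s ^ 2 - ‖z‖ ^ 2) * h z) μ :=
    integrable_mul_of_eq_zero (R := s) (integrable_one_div_sqrt hs)
      (fun z hz => by rw [sqrt_sq_sub_sq_eq_zero hs.le hz.le, div_zero]) hh
  have h2 : Integrable (fun z => k √(s ^ 2 - ‖z‖ ^ 2) * h z) μ :=
    integrable_mul_of_eq_zero (R := s) (integrable_comp_sqrt hk hk0 hs.le)
      (fun z hz => by rw [sqrt_sq_sub_sq_eq_zero hs.le hz.le, hk0]) hh
  simp_rw [radialIntegral, add_mul, mul_assoc]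
  rw [integral_add (h1.const_mul c) (h2.const_mul d), integral_const_mul, integral_const_mul]

lemma hasDerivAt_radialIntegral_kEven [Nontrivial E] {h : E → ℝ} (hh : ContDiff ℝ (⊤ : ℕ∞) h)
    (ℓ : ℕ) {t : ℝ} (ht : 0 < t) :
    HasDerivAt (radialIntegral μ (fun a => kEven ℓ ((1 / 2) * a)) h)
      (t * ((1 / (2 * ((2 * ℓ)‼ : ℝ))) * radialIntegral μ (fun a => 1 / a) h t +
        (1 / 4) * radialIntegral μ (fun a => kEven (ℓ + 1) ((1 / 2) * a)) h t)) t := by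
  have hc (i : ℕ) : Continuous fun a => kEven i ((1 / 2) * a) :=
    (continuous_kEven i).comp (by fun_prop)
  have hz (i : ℕ) : kEven i ((1 / 2) * 0) = 0 := by rw [mul_zero, kEven_zero]
  set Φ' : ℝ → ℝ := fun a =>
    (1 / 2) * (1 / ((2 * ℓ)‼ : ℝ) + (1 / 2) * a * kEven (ℓ + 1) ((1 / 2) * a)) with hΦ'
  have hΦ (a : ℝ) : HasDerivAt (fun a => kEven ℓ ((1 / 2) * a)) (Φ' a) a := by
    have := (hasDerivAt_kEven ℓ ((1 / 2) * a)).comp a ((hasDerivAt_id a).const_mul (1 / 2))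
    convert! this using 1
    rw [hΦ']
    ring
  have hΦ'c : Continuous Φ' := by
    have := hc (ℓ + 1)
    fun_prop
  have hΦ'nn (a : ℝ) (ha : 0 ≤ a) : 0 ≤ Φ' a := by
    have := kEven_nonneg (ℓ + 1) (by positivity : 0 ≤ (1 / 2) * a)
    positivity
  have hdiv : (fun a => Φ' a / a) = fun a => (1 / (2 * ((2 * ℓ)‼ : ℝ))) * (1 / a) +
      (1 / 4) * kEven (ℓ + 1) ((1 / 2) * a) := by
    ext a
    rcases eq_or_ne a 0 with rfl | ha
    · simp [kEven_zero]
    · have : ((2 * ℓ)‼ : ℝ) ≠ 0 := by exact_mod_cast (Nat.doubleFactorial_pos _).ne'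
      simp only [hΦ']
      field_simp
      ring
  -- A globally continuous representative of the derivative.
  set H : ℝ → ℝ := fun σ => (1 / (2 * ((2 * ℓ)‼ : ℝ))) *
      (σ ^ Module.finrank ℝ E * ∫ z, 1 / √(1 ^ 2 - ‖z‖ ^ 2) * h (σ • z) ∂μ) +
    (1 / 4) * (σ * (σ ^ Module.finrank ℝ E *
      ∫ z, kEven (ℓ + 1) ((1 / 2) * (σ * √(1 ^ 2 - ‖z‖ ^ 2))) * h (σ • z) ∂μ)) with hH
  have hHc : Continuous H := by
    have h1 := (contDiff_integral_one_div_sqrt (μ := μ) hh).continuous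
    have h2 := continuous_integral_comp_sqrt (μ := μ) (hc (ℓ + 1)) (hz (ℓ + 1)) hh.continuous
    fun_prop
  have hHeq (σ : ℝ) (hσ : 0 < σ) : H σ =
      σ * ((1 / (2 * ((2 * ℓ)‼ : ℝ))) * radialIntegral μ (fun a => 1 / a) h σ +
        (1 / 4) * radialIntegral μ (fun a => kEven (ℓ + 1) ((1 / 2) * a)) h σ) := by
    rw [radialIntegral_one_div_eq_scaled h hσ, radialIntegral_eq_scaled μ _ h hσ]
    simp only [hH]
    field_simp
  rw [← hHeq t ht]
  refine (hHc.integral_hasStrictDerivAt 0 t).hasDerivAt.congr_of_eventuallyEq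
    (eventually_of_mem (Ioi_mem_nhds ht) fun T hT => ?_)
  rw [radialIntegral_eq_intervalIntegral hΦ (hz ℓ) hΦ'c hΦ'nn hh.continuous hT]
  refine intervalIntegral.integral_congr_uIoo fun σ hσ => ?_
  rw [uIoo_of_le (mem_Ioi.1 hT).le] at hσ
  rw [hHeq σ hσ.1, hdiv, radialIntegral_linear_combination (hc (ℓ + 1)) (hz (ℓ + 1))
    hh.continuous _ _ hσ.1]

end Radial

/-- Nishihara decomposition, even `n`:
`S_n(t)g(x) = J_n(t)g(x) + e^{-t/2} W_n(t)g(x)` for all `x` and `t > 0`. -/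
theorem nishihara_decomposition_even (n : ℕ) (hn : Even n) (hn0 : 0 < n)
    (g : EuclideanSpace ℝ (Fin n) → ℝ) (hg : ContDiff ℝ (⊤ : ℕ∞) g) :
    ∀ (x : EuclideanSpace ℝ (Fin n)) (t : ℝ), 0 < t →
      Sn n g x t = Jn n g x t + exp (-t / 2) * Wn n g x t := by
  intro x t ht
  obtain ⟨m, rfl⟩ : ∃ m, n = 2 * m + 2 := by
    obtain ⟨k, rfl⟩ := hn
    exact ⟨k - 1, by omega⟩
  have e1 : (2 * m + 2 - 2) / 2 = m := by omega
  have e2 : (2 * m + 2) / 2 = m + 1 := by omega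
  set h : EuclideanSpace ℝ (Fin (2 * m + 2)) → ℝ := fun z => g (x - z)
  have hh : ContDiff ℝ (⊤ : ℕ∞) h := hg.comp (contDiff_const.sub contDiff_id)
  have hcosh : ∀ s, 0 < s →
      ∫ y in closedBall x s, (Real.cosh ((1 / 2) * √(s ^ 2 - ‖x - y‖ ^ 2)) /
        √(s ^ 2 - ‖x - y‖ ^ 2)) * g y =
      radialIntegral volume (fun a => 1 / a) h s +
        (1 / 2) * radialIntegral volume (fun a => kEven 1 ((1 / 2) * a)) h s := by
    intro s hs
    rw [setIntegral_closedBall_eq_radialIntegral volume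
      (ψ := fun a => Real.cosh ((1 / 2) * a) / a) (by simp) g x hs.le]
    have := radialIntegral_linear_combination (μ := volume)
      (k := fun a => kEven 1 ((1 / 2) * a))
      ((continuous_kEven 1).comp (continuous_const_mul (1 / 2 : ℝ))) (by simp [kEven_zero])
      hh.continuous 1 (1 / 2) hs
    simp_rw [cosh_div_self]
    simpa only [one_mul] using this
  have hwave : EqOn (fun s => ∫ y in closedBall x s, (1 / √(s ^ 2 - ‖x - y‖ ^ 2)) * g y)
      (radialIntegral volume (fun a => 1 / a) h) (Ioi 0) := fun s hs =>
    setIntegral_closedBall_eq_radialIntegral volume (ψ := fun a => 1 / a) (by simp) g x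
      (mem_Ioi.1 hs).le
  have hheat : ∫ y in closedBall x t, kEven (m + 1) ((1 / 2) * √(t ^ 2 - ‖x - y‖ ^ 2)) * g y =
      radialIntegral volume (fun a => kEven (m + 1) ((1 / 2) * a)) h t :=
    setIntegral_closedBall_eq_radialIntegral volume (ψ := fun a => kEven (m + 1) ((1 / 2) * a))
      (by simp [kEven_zero]) g x ht.le
  have hP := contDiffOn_radialIntegral_one_div (μ := volume) hh
  have main := iterOp_eq_sum_add
    (F := fun s => ∫ y in closedBall x s, (Real.cosh ((1 / 2) * √(s ^ 2 - ‖x - y‖ ^ 2)) /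
      √(s ^ 2 - ‖x - y‖ ^ 2)) * g y)
    (K := fun ℓ => radialIntegral volume (fun a => kEven ℓ ((1 / 2) * a)) h)
    (hP.congr hwave)
    (fun s hs => (hcosh s hs).trans (congrArg (· + _) (hwave hs).symm))
    (fun ℓ s hs => by
      have hw := hwave hs
      simp only at hw
      rw [hw]
      exact hasDerivAt_radialIntegral_kEven hh ℓ hs) m t ht
  rw [Sn, Jn, Wn, e1, e2, main, hheat, show 2 * m + 2 - 2 = 2 * m by omega, pow_mul]
  norm_num
  ring
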